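/- Let n ≥ 3 and let F_y be the complete flag (e_{n-1}+e_n ⊂ e_1 ⊂ e_2 ⊂ ⋯ ⊂ e_{n-2} ⊂ e_n) in ℂ^n. Then the stabilizer of F_y in K, namely {g ∈ K : g·F_y = F_y}, equals B_{n-2} := {g ∈ GL(n,ℂ) : g e_{n-1} = e_{n-1}, g e_n = e_n, and g U_k = U_k for all 1 ≤ k ≤ n-2}. -/

import Mathlib

open Module Submodule

noncomputable section

/-- `stdVec n m` is the `m`-th standard basis vector of `ℂ^n` (1-indexed); `0` out of range. -/
def stdVec (n m : ℕ) : Fin n → ℂ :=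
  if h : 1 ≤ m ∧ m ≤ n then Pi.single (⟨m - 1, by omega⟩ : Fin n) 1 else 0

/-- `stdSub n k` is the subspace `U_k = span(e_1, …, e_k)` of `ℂ^n`. -/
def stdSub (n k : ℕ) : Submodule ℂ (Fin n → ℂ) :=
  span ℂ (stdVec n '' Set.Icc 1 k)

/-- The action of an invertible linear map of `ℂ^n` on a chain of subspaces. -/
def actFlag (n : ℕ) (g : (Fin n → ℂ) ≃ₗ[ℂ] (Fin n → ℂ))
    (V : ℕ → Submodule ℂ (Fin n → ℂ)) (k : ℕ) : Submodule ℂ (Fin n → ℂ) :=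
  Submodule.map g.toLinearMap (V k)

/-- The orbit of the chain `V` under a set `B` of invertible linear maps. -/
def orbitOf (n : ℕ) (B : Set ((Fin n → ℂ) ≃ₗ[ℂ] (Fin n → ℂ)))
    (V : ℕ → Submodule ℂ (Fin n → ℂ)) : Set (ℕ → Submodule ℂ (Fin n → ℂ)) :=
  {V' | ∃ b ∈ B, actFlag n b V = V'}

/-- A complete flag in `ℂ^n`: `V k` is the `k`-dimensional member for `0 ≤ k ≤ n`;
values above `n` are pinned so that two flags are equal iff they agree in degrees `≤ n`. -/
def IsCompleteFlag (n : ℕ) (V : ℕ → Submodule ℂ (Fin n → ℂ)) : Prop :=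
  (∀ k, k ≤ n → finrank ℂ ↥(V k) = k) ∧ (∀ k, V k ≤ V (k + 1)) ∧ (∀ k, n ≤ k → V k = V n)

/-- The complete flag `(v 1 ⊂ v 2 ⊂ ⋯ ⊂ v n)` spanned by the vectors `v 1, …, v n`. -/
def flagOf (n : ℕ) (v : ℕ → Fin n → ℂ) (k : ℕ) : Submodule ℂ (Fin n → ℂ) :=
  span ℂ (v '' Set.Icc 1 (min k n))

/-- `K = {g ∈ GL(n,ℂ) : g e_n = e_n, g U_{n-1} = U_{n-1}}`, a copy of `GL(n-1,ℂ)`. -/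
def Ksub (n : ℕ) : Set ((Fin n → ℂ) ≃ₗ[ℂ] (Fin n → ℂ)) :=
  {g | g (stdVec n n) = stdVec n n ∧
       Submodule.map g.toLinearMap (stdSub n (n - 1)) = stdSub n (n - 1)}

/-- `V'` lies in the `K`-orbit of `V`. -/
def InKOrbit (n : ℕ) (V V' : ℕ → Submodule ℂ (Fin n → ℂ)) : Prop :=
  ∃ g ∈ Ksub n, actFlag n g V = V'

/-- Vectors of the representative flags: for `i = j` this gives the flag `F_i`
`(e_1 ⊂ ⋯ ⊂ e_{i-1} ⊂ e_n ⊂ e_i ⊂ ⋯ ⊂ e_{n-1})` (`e_n` in position `i`), and for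
`i < j` the flag `F_{i,j}`
`(e_1 ⊂ ⋯ ⊂ e_{i-1} ⊂ e_i + e_n ⊂ e_{i+1} ⊂ ⋯ ⊂ e_{j-1} ⊂ e_n ⊂ e_j ⊂ ⋯ ⊂ e_{n-1})`. -/
def repVec (n i j m : ℕ) : Fin n → ℂ :=
  if m < i then stdVec n m
  else if m = i then (if i < j then stdVec n i else 0) + stdVec n n
  else if m < j then stdVec n m
  else if m = j then stdVec n n
  else stdVec n (m - 1)

/-- `repFlag n i i = F_i` and `repFlag n i j = F_{i,j}` for `i < j`. -/
def repFlag (n i j : ℕ) : ℕ → Submodule ℂ (Fin n → ℂ) := flagOf n (repVec n i j)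

/-- The flag `F_y = (e_{n-1} + e_n ⊂ e_1 ⊂ e_2 ⊂ ⋯ ⊂ e_{n-2} ⊂ e_n)`. -/
def FyVec (n m : ℕ) : Fin n → ℂ :=
  if m = 1 then stdVec n (n - 1) + stdVec n n
  else if m = n then stdVec n n
  else stdVec n (m - 1)

def FyFlag (n : ℕ) : ℕ → Submodule ℂ (Fin n → ℂ) := flagOf n (FyVec n)

/-!
Write `P = ⟨e_{n-1} + e_n⟩`; the nonzero members of `F_y` are the subspaces `U_k ⊔ P` with
`k ≤ n - 2` and the whole space. As `P` meets `U_{n-1}` trivially, the modular law gives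
`(U_k ⊔ P) ⊓ U_{n-1} = U_k`, so an element of `K` fixing `F_y` fixes every `U_k`. It scales
`e_{n-1} + e_n` by some `c`; comparing `e_n`-components gives `c = 1`, whence `e_{n-1}` is fixed.
-/

lemma orderIso_apply_eq_of_sup_eq {α : Type*} [Lattice α] [IsModularLattice α] [OrderBot α]
    (f : α ≃o α) {a p u : α} (hau : a ≤ u) (hpu : Disjoint p u) (hu : f u = u)
    (hap : f (a ⊔ p) = a ⊔ p) : f a = a := by
  have h_inf : (a ⊔ p) ⊓ u = a := by rw [sup_inf_assoc_of_le p hau, hpu.eq_bot, sup_bot_eq]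
  calc f a = f (a ⊔ p) ⊓ f u := by rw [← f.map_inf, h_inf]
    _ = a := by rw [hap, hu, h_inf]

section PrefixSpan

variable {R M : Type*} [Semiring R] [AddCommMonoid M] [Module R M]

lemma map_sup_span_singleton_eq_self {f : M →ₗ[R] M} {p : Submodule R M} {x : M}
    (hp : p.map f = p) (hx : f x = x) : (p ⊔ R ∙ x).map f = p ⊔ R ∙ x := by
  rw [Submodule.map_sup, hp, map_span, Set.image_singleton, hx]

variable (R) in
/-- The span of the first `k` terms `v 1, …, v k` of a sequence: the `k`-th member of the chain of
subspaces attached to it. Terms are counted from `1`, so `v 0` is ignored. -/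
def prefixSpan (v : ℕ → M) (k : ℕ) : Submodule R M :=
  span R (v '' Set.Icc 1 k)

lemma prefixSpan_zero (v : ℕ → M) : prefixSpan R v 0 = ⊥ := by
  simp [prefixSpan]

lemma prefixSpan_succ (v : ℕ → M) (k : ℕ) :
    prefixSpan R v (k + 1) = prefixSpan R v k ⊔ R ∙ v (k + 1) := by
  rw [prefixSpan, ← Set.insert_Icc_right_eq_Icc_add_one (by lia), Set.image_insert_eq, span_insert,
    sup_comm, prefixSpan]

lemma prefixSpan_mono (v : ℕ → M) : Monotone (prefixSpan R v) := fun _ _ h =>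
  span_mono (Set.image_mono (Set.Icc_subset_Icc_right h))

lemma mem_prefixSpan (v : ℕ → M) {i k : ℕ} (hi : 1 ≤ i) (hik : i ≤ k) : v i ∈ prefixSpan R v k :=
  subset_span ⟨i, ⟨hi, hik⟩, rfl⟩

/-- The sequence `v (n - 1) + v n, v 1, …, v (n - 2), v n`, which turns the standard basis into the
basis defining `F_y`; values at indices outside `1, …, n` are irrelevant. -/
def twistedSeq (n : ℕ) (v : ℕ → M) (k : ℕ) : M :=
  if k = 1 then v (n - 1) + v n else if k = n then v n else v (k - 1)

lemma prefixSpan_twistedSeq_succ (v : ℕ → M) {m k : ℕ} (hk : k ≤ m) :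
    prefixSpan R (twistedSeq (m + 2) v) (k + 1) =
      prefixSpan R v k ⊔ R ∙ (v (m + 1) + v (m + 2)) := by
  induction k with
  | zero => simp [prefixSpan, twistedSeq]
  | succ k ih =>
    have h_term : twistedSeq (m + 2) v (k + 2) = v (k + 1) := by
      rw [twistedSeq, if_neg (by lia), if_neg (by lia)]
      rfl
    rw [prefixSpan_succ, ih (by lia), h_term, prefixSpan_succ v, sup_right_comm]

lemma twistedSeq_self (v : ℕ → M) (m : ℕ) : twistedSeq (m + 2) v (m + 2) = v (m + 2) := by
  simp [twistedSeq]

lemma map_prefixSpan_twistedSeq {f : M →ₗ[R] M} {v : ℕ → M} {m : ℕ}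
    (h_penult : f (v (m + 1)) = v (m + 1)) (h_last : f (v (m + 2)) = v (m + 2))
    (h_prefix : ∀ k ≤ m, (prefixSpan R v k).map f = prefixSpan R v k) {k : ℕ} (hk : k ≤ m + 2) :
    (prefixSpan R (twistedSeq (m + 2) v) k).map f = prefixSpan R (twistedSeq (m + 2) v) k := by
  have h_succ : ∀ j ≤ m, (prefixSpan R (twistedSeq (m + 2) v) (j + 1)).map f =
      prefixSpan R (twistedSeq (m + 2) v) (j + 1) := fun j hj => by
    rw [prefixSpan_twistedSeq_succ v hj]
    exact map_sup_span_singleton_eq_self (h_prefix j hj) (by rw [map_add, h_penult, h_last])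
  obtain rfl | hk_top := hk.eq_or_lt
  · rw [prefixSpan_succ, twistedSeq_self]
    exact map_sup_span_singleton_eq_self (h_succ m le_rfl) h_last
  · cases k with
    | zero => rw [prefixSpan_zero, Submodule.map_bot]
    | succ j => exact h_succ j (by lia)

end PrefixSpan

section Stabilizer

variable {R M : Type*} [Ring R] [AddCommGroup M] [Module R M]

lemma disjoint_span_singleton_add {U : Submodule R M} {w z : M} (hw : w ∈ U)
    (hz : ∀ c : R, c • z ∈ U → c = 0) : Disjoint (R ∙ (w + z)) U := by
  rw [Submodule.disjoint_def]
  intro x hx hxU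
  obtain ⟨c, rfl⟩ := mem_span_singleton.1 hx
  rw [smul_add, U.add_mem_iff_right (U.smul_mem c hw)] at hxU
  rw [hz c hxU, zero_smul]

lemma apply_eq_self_of_apply_add_mem_span_singleton {f : M →ₗ[R] M} {U : Submodule R M} {w z : M}
    (hw : w ∈ U) (hz : ∀ c : R, c • z ∈ U → c = 0) (hfw : f w ∈ U) (hfz : f z = z)
    (h_add : f (w + z) ∈ R ∙ (w + z)) : f w = w := by
  obtain ⟨c, hc⟩ := mem_span_singleton.1 h_add
  rw [map_add, hfz, smul_add] at hc
  have h_coeff : (c - 1) • z = f w - c • w := by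
    rw [sub_smul, one_smul, sub_eq_sub_iff_add_eq_add, add_comm, hc]
  have hc_one : c = 1 :=
    sub_eq_zero.1 (hz _ (h_coeff ▸ U.sub_mem hfw (U.smul_mem c hw)))
  rw [hc_one, one_smul, one_smul] at hc
  exact (add_right_cancel hc).symm

theorem stmt_6_general {m : ℕ} {v : ℕ → M}
    (hv : ∀ c : R, c • v (m + 2) ∈ prefixSpan R v (m + 1) → c = 0) (g : M ≃ₗ[R] M) :
    ((g (v (m + 2)) = v (m + 2) ∧
        (prefixSpan R v (m + 1)).map g.toLinearMap = prefixSpan R v (m + 1)) ∧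
      ∀ k ≤ m + 2, (prefixSpan R (twistedSeq (m + 2) v) k).map g.toLinearMap =
        prefixSpan R (twistedSeq (m + 2) v) k) ↔
    g (v (m + 1)) = v (m + 1) ∧ g (v (m + 2)) = v (m + 2) ∧
      ∀ k, 1 ≤ k → k ≤ m → (prefixSpan R v k).map g.toLinearMap = prefixSpan R v k := by
  constructor
  · rintro ⟨⟨h_last, h_hyperplane⟩, h_flag⟩
    have hw : v (m + 1) ∈ prefixSpan R v (m + 1) := mem_prefixSpan v (by lia) le_rfl
    have h_sup : ∀ k ≤ m, (prefixSpan R v k ⊔ R ∙ (v (m + 1) + v (m + 2))).map g.toLinearMap =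
        prefixSpan R v k ⊔ R ∙ (v (m + 1) + v (m + 2)) := fun k hk => by
      simpa only [prefixSpan_twistedSeq_succ v hk] using h_flag (k + 1) (by lia)
    have h_line : (R ∙ (v (m + 1) + v (m + 2))).map g.toLinearMap =
        R ∙ (v (m + 1) + v (m + 2)) := by
      simpa only [prefixSpan_zero, bot_sup_eq] using h_sup 0 m.zero_le
    refine ⟨?_, h_last, fun k _ hk => ?_⟩
    · exact apply_eq_self_of_apply_add_mem_span_singleton (f := g.toLinearMap) hw hv
        (h_hyperplane.le (mem_map_of_mem hw)) h_last
        (h_line.le (mem_map_of_mem (mem_span_singleton_self _)))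
    · exact orderIso_apply_eq_of_sup_eq (orderIsoMapComap g) (prefixSpan_mono v (by lia))
        (disjoint_span_singleton_add hw hv) h_hyperplane (h_sup k hk)
  · rintro ⟨h_penult, h_last, h_prefix⟩
    have h_prefix' : ∀ k ≤ m, (prefixSpan R v k).map g.toLinearMap = prefixSpan R v k
      | 0, _ => by rw [prefixSpan_zero, Submodule.map_bot]
      | k + 1, hk => h_prefix (k + 1) (by lia) hk
    refine ⟨⟨h_last, ?_⟩, fun k => map_prefixSpan_twistedSeq h_penult h_last h_prefix'⟩
    rw [prefixSpan_succ]
    exact map_sup_span_singleton_eq_self (h_prefix' m le_rfl) h_penult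

end Stabilizer

lemma actFlag_flagOf_eq_iff {n : ℕ} {g : (Fin n → ℂ) ≃ₗ[ℂ] (Fin n → ℂ)} {v : ℕ → Fin n → ℂ} :
    actFlag n g (flagOf n v) = flagOf n v ↔
      ∀ k ≤ n, (prefixSpan ℂ v k).map g.toLinearMap = prefixSpan ℂ v k := by
  refine ⟨fun h k hk => ?_, fun h => funext fun k => h (min k n) (min_le_right k n)⟩
  simpa only [actFlag, flagOf, prefixSpan, min_eq_left hk] using congrFun h k

lemma stdVec_succ {n : ℕ} (i : Fin n) : stdVec n (i + 1) = Pi.single i 1 := by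
  simp [stdVec]

lemma apply_eq_zero_of_mem_stdSub {n k : ℕ} {x : Fin n → ℂ} (hx : x ∈ stdSub n k) {i : Fin n}
    (hi : k ≤ i) : x i = 0 := by
  suffices h_le : stdSub n k ≤ LinearMap.ker (LinearMap.proj (R := ℂ) (φ := fun _ => ℂ) i) from
    h_le hx
  rw [stdSub, span_le]
  rintro _ ⟨j, ⟨hj, hjk⟩, rfl⟩
  have h_ne : i ≠ ⟨j - 1, by lia⟩ := fun h => by lia
  rw [SetLike.mem_coe, LinearMap.mem_ker, LinearMap.proj_apply, stdVec, dif_pos (by lia),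
    Pi.single_eq_of_ne h_ne]

lemma eq_zero_of_smul_stdVec_succ_mem_stdSub {n : ℕ} {i : Fin n} {c : ℂ}
    (h : c • stdVec n (i + 1) ∈ stdSub n i) : c = 0 := by
  simpa [stdVec_succ] using apply_eq_zero_of_mem_stdSub h le_rfl

/-- The stabilizer of `F_y` in `K` is `B_{n-2}`. -/
theorem stmt_6 (n : ℕ) (hn : 3 ≤ n) :
    {g | g ∈ Ksub n ∧ actFlag n g (FyFlag n) = FyFlag n} =
      {g : (Fin n → ℂ) ≃ₗ[ℂ] (Fin n → ℂ) |
        g (stdVec n (n - 1)) = stdVec n (n - 1) ∧ g (stdVec n n) = stdVec n n ∧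
          ∀ k, 1 ≤ k → k ≤ n - 2 →
            Submodule.map g.toLinearMap (stdSub n k) = stdSub n k} := by
  obtain ⟨m, rfl⟩ := Nat.exists_eq_add_of_le' (Nat.le_of_succ_le hn)
  exact Set.ext fun g => (and_congr_right' actFlag_flagOf_eq_iff).trans <|
    stmt_6_general (fun _ => eq_zero_of_smul_stdVec_succ_mem_stdSub (i := Fin.last (m + 1))) g
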